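/- If there exists a continuous injective map from ℝP^{n-1} to S^{n-1}, then n ≤ 2. -/

import Mathlib

open Metric

/-- The antipodal identification on the unit sphere in `ℝⁿ`. -/
def antipodalSetoid (n : ℕ) : Setoid (sphere (0 : EuclideanSpace ℝ (Fin n)) 1) where
  r x y := (x : EuclideanSpace ℝ (Fin n)) = y ∨ (x : EuclideanSpace ℝ (Fin n)) = -y
  iseqv := by
    constructor
    · intro x; left; rfl
    · rintro x y (h | h)
      · left; exact h.symm
      · right; simp [h]
    · rintro x y z (h | h) (h' | h') <;> simp [h, h']

/-- Real projective space `ℝP^{n-1}`, as the quotient of `S^{n-1}` by the antipodal map. -/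
def RealProjSpace (n : ℕ) : Type := Quotient (antipodalSetoid n)

noncomputable instance (n : ℕ) : TopologicalSpace (RealProjSpace n) :=
  instTopologicalSpaceQuotient

/-!
Composing with the quotient map turns a locally injective map from `ℝP^{n-1}` to `S^{n-1}` into a
locally injective self-map of the sphere. By invariance of domain it is open, so it is a local
homeomorphism and, by compactness, a covering map. For `n > 2` the sphere is the union of the
complements of two points, which are simply connected and have connected intersection. Sections of
the covering over these two sets can therefore be glued to a global section, which forces the
covering to be injective, although it identifies antipodes.

Invariance of domain follows from Brouwer's fixed-point theorem by perturbing an extension of the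
inverse map, and Brouwer's theorem from the volume argument of Milnor and Rogers: if `h` vanishes on
the unit sphere, then the integral over the unit ball of the Jacobian of `x ↦ x + t • h x` is a
polynomial in `t` and equals the volume of the ball for small `t > 0`, hence also for `t = 1`,
whereas a map with values in the sphere has zero Jacobian.
-/

open MeasureTheory Polynomial Set Topology
open scoped NNReal

section RadialProjection

variable {E : Type*} [NormedAddCommGroup E] [NormedSpace ℝ E]

/-- The radial projection of a normed space onto its closed unit ball. -/
noncomputable def radialProj (x : E) : E :=
  (max 1 ‖x‖)⁻¹ • x

theorem radialProj_of_norm_le_one {x : E} (hx : ‖x‖ ≤ 1) : radialProj x = x := by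
  simp [radialProj, hx]

theorem norm_radialProj_of_one_le_norm {x : E} (hx : 1 ≤ ‖x‖) : ‖radialProj x‖ = 1 := by
  have : ‖x‖ ≠ 0 := by linarith
  simp [radialProj, norm_smul, hx, this]

theorem radialProj_mem_closedBall (x : E) : radialProj x ∈ closedBall (0 : E) 1 := by
  rw [mem_closedBall_zero_iff]
  rcases le_total ‖x‖ 1 with h | h
  · rwa [radialProj_of_norm_le_one h]
  · exact (norm_radialProj_of_one_le_norm h).le

theorem lipschitzWith_radialProj : LipschitzWith 2 (radialProj : E → E) := by
  refine LipschitzWith.of_dist_le_mul fun x y => ?_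
  have hmax : |max 1 ‖y‖ - max 1 ‖x‖| ≤ ‖x - y‖ := by
    rw [abs_sub_comm, max_comm 1 ‖x‖, max_comm 1 ‖y‖]
    exact (abs_max_sub_max_le_abs ‖x‖ ‖y‖ 1).trans (abs_norm_sub_norm_le x y)
  have ha : 1 ≤ max 1 ‖x‖ := le_max_left _ _
  have hb : 1 ≤ max 1 ‖y‖ := le_max_left _ _
  have hyb : ‖y‖ ≤ max 1 ‖y‖ := le_max_right _ _
  rw [dist_eq_norm, dist_eq_norm, radialProj, radialProj, NNReal.coe_ofNat]
  generalize max 1 ‖x‖ = a at *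
  generalize max 1 ‖y‖ = b at *
  have ha0 : 0 < a := by linarith
  have hb0 : 0 < b := by linarith
  have hsplit : a⁻¹ • x - b⁻¹ • y = a⁻¹ • (x - y) + (a⁻¹ * (b⁻¹ * (b - a))) • y := by
    match_scalars <;> field_simp
    ring
  have ha1 : a⁻¹ ≤ 1 := inv_le_one_of_one_le₀ ha
  have hyb1 : b⁻¹ * ‖y‖ ≤ 1 := by rwa [inv_mul_le_one₀ hb0]
  calc ‖a⁻¹ • x - b⁻¹ • y‖ ≤ ‖a⁻¹ • (x - y)‖ + ‖(a⁻¹ * (b⁻¹ * (b - a))) • y‖ := by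
        rw [hsplit]; exact norm_add_le _ _
    _ = a⁻¹ * ‖x - y‖ + a⁻¹ * |b - a| * (b⁻¹ * ‖y‖) := by
        simp only [norm_smul, norm_mul, norm_inv, Real.norm_eq_abs, abs_of_pos ha0, abs_of_pos hb0]
        ring
    _ ≤ 1 * ‖x - y‖ + 1 * ‖x - y‖ * 1 := by gcongr
    _ = 2 * ‖x - y‖ := by ring

end RadialProjection

section Determinant

variable {E : Type*} [NormedAddCommGroup E] [NormedSpace ℝ E] [FiniteDimensional ℝ E]

theorem det_one_add_pos_of_norm_lt_one {A : E →L[ℝ] E} (hA : ‖A‖ < 1) : 0 < (1 + A).det := by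
  have hne : ∀ s ∈ Icc (0 : ℝ) 1, (1 + s • A).det ≠ 0 := by
    intro s hs
    have hlt : ‖-(s • A)‖ < 1 := by
      rw [norm_neg, norm_smul, Real.norm_of_nonneg hs.1]
      exact (mul_le_of_le_one_left (norm_nonneg A) hs.2).trans_lt hA
    have hunit : IsUnit (1 + s • A) := by
      simpa using isUnit_one_sub_of_norm_lt_one hlt
    exact (LinearMap.isUnit_det _ (hunit.map (ContinuousLinearMap.toLinearMapRingHom))).ne_zero
  by_contra! hneg
  have hcont : Continuous fun s : ℝ => (1 + s • A).det :=
    ContinuousLinearMap.continuous_det.comp (by fun_prop)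
  obtain ⟨s, hs, hs0⟩ := intermediate_value_Icc' zero_le_one hcont.continuousOn
    ⟨by simpa using hneg, by simp [ContinuousLinearMap.det]⟩
  exact hne s hs hs0

theorem exists_polynomial_eval_eq_det_one_add_smul (A : E →L[ℝ] E) :
    ∃ p : ℝ[X], p.natDegree ≤ Module.finrank ℝ E ∧ ∀ t, p.eval t = (1 + t • A).det := by
  let b := Module.finBasis ℝ E
  let M := LinearMap.toMatrix b b (A : E →ₗ[ℝ] E)
  refine ⟨((X : ℝ[X]) • M.map C + (1 : Matrix _ _ ℝ).map C).det, ?_, fun t => ?_⟩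
  · simpa only [Fintype.card_fin] using natDegree_det_X_add_C_le M 1
  have hmatrix : LinearMap.toMatrix b b (1 + t • A : E →L[ℝ] E) = t • M + 1 := by
    simp [M, LinearMap.toMatrix_one, add_comm]
  rw [ContinuousLinearMap.det, ← LinearMap.det_toMatrix b, hmatrix, ← coe_evalRingHom t,
    RingHom.map_det]
  congr 1
  ext i j
  rcases eq_or_ne i j with rfl | hij
  · simpa using mul_comm (M i i) t
  · simpa [hij] using mul_comm (M i j) t

end Determinant

theorem exists_polynomial_eval_eq_integral {α : Type*} [MeasurableSpace α] {μ : Measure α} {n : ℕ}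
    {f : ℝ → α → ℝ} (hf : ∀ x, ∃ p : ℝ[X], p.natDegree ≤ n ∧ ∀ t, p.eval t = f t x)
    (hint : ∀ t, Integrable (f t) μ) :
    ∃ p : ℝ[X], ∀ t, p.eval t = ∫ x, f t x ∂μ := by
  let s := Finset.range (n + 1)
  let v : ℕ → ℝ := Nat.cast
  have hinterp : ∀ t x, f t x = ∑ i ∈ s, f (v i) x * (Lagrange.basis s v i).eval t := by
    intro t x
    obtain ⟨p, hdeg, hp⟩ := hf x
    have hlt : p.degree < s.card := by
      rw [Finset.card_range]
      exact degree_le_natDegree.trans_lt (by exact_mod_cast Nat.lt_succ_of_le hdeg)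
    rw [← hp, Lagrange.eq_interpolate (Nat.cast_injective.injOn (s := (s : Set ℕ))) hlt,
      Lagrange.interpolate_apply, eval_finsetSum]
    simp [hp, v]
  refine ⟨∑ i ∈ s, C (∫ x, f (v i) x ∂μ) * Lagrange.basis s v i, fun t => ?_⟩
  simp_rw [hinterp t]
  rw [integral_finsetSum _ fun i _ => (hint (v i)).mul_const _, eval_finsetSum]
  simp_rw [integral_mul_const, eval_mul, eval_C]

section VolumeOfBall

variable {E : Type*} [NormedAddCommGroup E] [NormedSpace ℝ E]

theorem bijective_id_add_of_lipschitzWith [CompleteSpace E] {g : E → E} {K : ℝ≥0}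
    (hg : LipschitzWith K g) (hK : K < 1) : Function.Bijective fun x => x + g x := by
  have happrox : ApproximatesLinearOn (fun x => x + g x)
      (ContinuousLinearEquiv.refl ℝ E : E →L[ℝ] E) univ K := fun x _ y _ => by
    simpa [add_sub_add_comm] using hg.norm_sub_le x y
  have hc : Subsingleton E ∨
      K < ‖((ContinuousLinearEquiv.refl ℝ E).symm : E →L[ℝ] E)‖₊⁻¹ := by
    rcases subsingleton_or_nontrivial E with hE | hE
    · exact .inl hE
    · have hnorm : ‖((ContinuousLinearEquiv.refl ℝ E).symm : E →L[ℝ] E)‖₊ = 1 :=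
        NNReal.eq ContinuousLinearMap.norm_id
      exact .inr (by rwa [hnorm, inv_one])
  exact (happrox.toHomeomorph _ hc).bijective

theorem bijOn_ball_id_add [CompleteSpace E] {h : E → E} {K : ℝ≥0}
    (hlip : LipschitzWith K (h ∘ radialProj)) (hK : K < 1) (h0 : ∀ x ∈ sphere (0 : E) 1, h x = 0) :
    BijOn (fun x => x + h x) (ball 0 1) (ball 0 1) := by
  let φ : E → E := fun x => x + h (radialProj x)
  have hφ : Function.Bijective φ := bijective_id_add_of_lipschitzWith hlip hK
  have hout : EqOn id φ (ball (0 : E) 1)ᶜ := by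
    intro x hx
    have hx1 : 1 ≤ ‖x‖ := by simpa using hx
    simp [φ, h0 _ (mem_sphere_zero_iff_norm.2 (norm_radialProj_of_one_le_norm hx1))]
  have hin : EqOn φ (fun x => x + h x) (ball 0 1) := by
    intro x hx
    simp only [φ, radialProj_of_norm_le_one (mem_ball_zero_iff.1 hx).le]
  simpa using (((bijOn_id _).congr hout).compl hφ).congr (by rwa [compl_compl])

variable [FiniteDimensional ℝ E] [MeasurableSpace E] [BorelSpace E] {μ : Measure E}
  [μ.IsAddHaarMeasure]

theorem setIntegral_det_eq_measureReal_image {s : Set E} {f : E → E} {f' : E → E →L[ℝ] E}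
    (hs : MeasurableSet s) (hf : ∀ x ∈ s, HasFDerivWithinAt f (f' x) s x) (hinj : InjOn f s)
    (hdet : ∀ x ∈ s, 0 ≤ (f' x).det) : ∫ x in s, (f' x).det ∂μ = μ.real (f '' s) := by
  have := integral_image_eq_integral_abs_det_fderiv_smul μ hs hf hinj fun _ => (1 : ℝ)
  simp only [smul_eq_mul, mul_one, setIntegral_const] at this
  rw [this]
  exact setIntegral_congr_fun hs fun x hx => (abs_of_nonneg (hdet x hx)).symm

theorem setIntegral_det_one_add_fderiv_ball_of_lipschitzWith {h : E → E} {K : ℝ≥0}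
    (hh : Differentiable ℝ h) (hlip : LipschitzWith K (h ∘ radialProj)) (hK : K < 1)
    (h0 : ∀ x ∈ sphere (0 : E) 1, h x = 0) :
    ∫ x in ball 0 1, (1 + fderiv ℝ h x).det ∂μ = μ.real (ball 0 1) := by
  have hbij := bijOn_ball_id_add hlip hK h0
  have hlipBall : LipschitzOnWith K h (ball 0 1) := fun x hx y hy => by
    have hx' := radialProj_of_norm_le_one (mem_ball_zero_iff.1 hx).le
    have hy' := radialProj_of_norm_le_one (mem_ball_zero_iff.1 hy).le
    simpa only [Function.comp_apply, hx', hy'] using hlip x y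
  have hnorm : ∀ x ∈ ball (0 : E) 1, ‖fderiv ℝ h x‖ < 1 := fun x hx =>
    (norm_fderiv_le_of_lipschitzOn ℝ (isOpen_ball.mem_nhds hx) hlipBall).trans_lt
      (by exact_mod_cast hK)
  have hderiv : ∀ x ∈ ball (0 : E) 1,
      HasFDerivWithinAt (fun x => x + h x) (1 + fderiv ℝ h x) (ball 0 1) x := fun x _ =>
    ((hasFDerivAt_id x).fun_add (hh x).hasFDerivAt).hasFDerivWithinAt
  rw [setIntegral_det_eq_measureReal_image measurableSet_ball hderiv hbij.injOn
    fun x hx => (det_one_add_pos_of_norm_lt_one (hnorm x hx)).le, hbij.image_eq]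

/-- With `t • h` in place of `h`, the left-hand side is a polynomial in `t`, and it is constant for
small `t > 0` because `x ↦ x + t • h x` then maps the ball bijectively onto itself. -/
theorem setIntegral_det_one_add_fderiv_ball {h : E → E} (hh : ContDiff ℝ 1 h)
    (h0 : ∀ x ∈ sphere (0 : E) 1, h x = 0) :
    ∫ x in ball 0 1, (1 + fderiv ℝ h x).det ∂μ = μ.real (ball 0 1) := by
  obtain ⟨K, hK⟩ := hh.locallyLipschitz.locallyLipschitzOn.exists_lipschitzOnWith_of_compact
    (isCompact_closedBall (0 : E) 1)
  have hlip : LipschitzWith (K * 2) (h ∘ radialProj) := lipschitzOnWith_univ.1 <|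
    hK.comp lipschitzWith_radialProj.lipschitzOnWith fun x _ => radialProj_mem_closedBall x
  have hsmall : ∀ t ∈ Ioo (0 : ℝ) (K * 2 + 1)⁻¹,
      ∫ x in ball 0 1, (1 + t • fderiv ℝ h x).det ∂μ = μ.real (ball 0 1) := by
    rintro t ⟨ht0, ht⟩
    have htK : ‖t‖₊ * (K * 2) < 1 := by
      rw [← NNReal.coe_lt_coe]
      push_cast
      rw [Real.norm_of_nonneg ht0.le]
      calc t * (K * 2) < t * (K * 2 + 1) := by linarith
        _ ≤ (K * 2 + 1 : ℝ)⁻¹ * (K * 2 + 1) := by gcongr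
        _ = 1 := inv_mul_cancel₀ (by positivity)
    have hdiff := hh.differentiable one_ne_zero
    have := setIntegral_det_one_add_fderiv_ball_of_lipschitzWith (μ := μ) (hdiff.const_smul t)
      ((lipschitzWith_smul t).comp hlip) htK fun x hx => by simp [h0 x hx]
    simpa only [fderiv_const_smul (hdiff _)] using this
  have hint : ∀ t : ℝ, IntegrableOn (fun x => (1 + t • fderiv ℝ h x).det) (ball 0 1) μ := fun t =>
    ((ContinuousLinearMap.continuous_det.comp (continuous_const.add
      ((hh.continuous_fderiv one_ne_zero).const_smul t))).continuousOn.integrableOn_compact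
        (isCompact_closedBall 0 1)).mono_set ball_subset_closedBall
  obtain ⟨p, hp⟩ := exists_polynomial_eval_eq_integral
    (fun x => exists_polynomial_eval_eq_det_one_add_smul (fderiv ℝ h x)) hint
  have hconst : p = C (μ.real (ball 0 1)) := eq_of_infinite_eval_eq _ _ <|
    (Ioo_infinite (show (0 : ℝ) < (K * 2 + 1)⁻¹ by positivity)).mono fun t ht => by
      rw [mem_ofPred_eq, hp, eval_C]
      exact hsmall t ht
  simpa [hconst] using (hp 1).symm

end VolumeOfBall

section Brouwer

variable {E : Type*} [NormedAddCommGroup E] [InnerProductSpace ℝ E] [FiniteDimensional ℝ E]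

theorem det_eq_zero_of_hasFDerivAt_of_norm_eq_const {r : E → E} {c : ℝ} (hc : c ≠ 0)
    (hnorm : ∀ x, ‖r x‖ = c) {A : E →L[ℝ] E} {x : E} (hr : HasFDerivAt r A x) : A.det = 0 := by
  have horth : ∀ w, inner ℝ (r x) (A w) = 0 := by
    have hconst : (‖r ·‖ ^ 2) = fun _ => c ^ 2 := funext fun y => by rw [hnorm]
    have hzero := (hconst ▸ hr.norm_sq).unique (hasFDerivAt_const _ _)
    intro w
    simpa using DFunLike.congr_fun hzero w
  by_contra hne
  obtain ⟨w, hw⟩ := (LinearMap.equivOfDetNeZero (A : E →ₗ[ℝ] E) hne).surjective (r x)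
  have hself := horth w
  rw [show A w = r x from hw, real_inner_self_eq_norm_sq, hnorm] at hself
  exact pow_ne_zero 2 hc hself

theorem not_contDiff_retraction_sphere {r : E → E} (hnorm : ∀ x, ‖r x‖ = 1)
    (hfix : ∀ x ∈ sphere (0 : E) 1, r x = x) : ¬ContDiff ℝ 1 r := by
  intro hr
  borelize E
  have hvol := setIntegral_det_one_add_fderiv_ball (μ := Measure.addHaar) (hr.sub contDiff_id)
    fun x hx => sub_eq_zero.2 (hfix x hx)
  have hdet : ∀ x, (1 + fderiv ℝ (fun y => r y - y) x).det = 0 := fun x => by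
    have hrx := (hr.differentiable one_ne_zero x).hasFDerivAt
    have hsub : fderiv ℝ (fun y => r y - y) x = fderiv ℝ r x - 1 :=
      (hrx.fun_sub (hasFDerivAt_id x)).fderiv
    rw [hsub, add_sub_cancel]
    exact det_eq_zero_of_hasFDerivAt_of_norm_eq_const one_ne_zero hnorm hrx
  simp_rw [id, hdet, integral_zero] at hvol
  exact (ENNReal.toReal_pos (measure_ball_pos _ 0 one_pos).ne' measure_ball_lt_top.ne).ne hvol

/-- If `H` had no zeros, a `C¹` approximation `K` of it, equal to `H` far out, would yield the
retraction `x ↦ K (ρ • x) / ‖K (ρ • x)‖` onto the unit sphere. -/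
theorem exists_eq_zero_of_eq_self_of_le_norm {H : E → E} {R : ℝ} (hH : Continuous H)
    (hid : ∀ x, R ≤ ‖x‖ → H x = x) : ∃ x, H x = 0 := by
  by_contra! hne
  let ρ := max R 0 + 1
  have hρ : 0 < ρ := by positivity
  have hRρ : R < ρ := (le_max_left R 0).trans_lt (lt_add_one _)
  obtain ⟨K, hK, hKclose, hKid, -⟩ := hH.exists_contDiff_approx_and_eqOn 1 hH.norm
    (fun x => norm_pos_iff.2 (hne x)) (isClosed_le continuous_const continuous_norm)
    ((isOpen_lt continuous_const continuous_norm).mem_nhdsSet.2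
      fun x (hx : ρ ≤ ‖x‖) => hRρ.trans_le hx)
    (contDiffOn_id.congr fun x (hx : R < ‖x‖) => hid x hx.le)
  have hK0 : ∀ x, ‖K x‖ ≠ 0 := fun x h0 => by
    simpa [norm_eq_zero.1 h0] using hKclose x
  refine not_contDiff_retraction_sphere (r := fun x => ‖K (ρ • x)‖⁻¹ • K (ρ • x)) (fun x => ?_)
    (fun x hx => ?_) ?_
  · rw [norm_smul, norm_inv, norm_norm, inv_mul_cancel₀ (hK0 _)]
  · have hx1 : ‖ρ • x‖ = ρ := by
      rw [norm_smul, mem_sphere_zero_iff_norm.1 hx, mul_one, Real.norm_of_nonneg hρ.le]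
    rw [hKid hx1.ge, hid _ (hRρ.le.trans hx1.ge), hx1, inv_smul_smul₀ hρ.ne']
  · have hKρ : ContDiff ℝ 1 fun x => K (ρ • x) := hK.comp (contDiff_id.const_smul ρ)
    exact ((hKρ.norm ℝ fun x => norm_ne_zero_iff.1 (hK0 _)).inv fun x => hK0 _).smul hKρ

theorem exists_eq_self_of_mapsTo_closedBall {f : E → E} (hf : ContinuousOn f (closedBall 0 1))
    (hmaps : MapsTo f (closedBall 0 1) (closedBall 0 1)) : ∃ x ∈ closedBall (0 : E) 1, f x = x := by
  let χ : E → ℝ := fun x => max 0 (min 1 (2 - ‖x‖))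
  have hχ : Continuous χ := by fun_prop
  have hfproj : Continuous fun x => f (radialProj x) :=
    hf.comp_continuous lipschitzWith_radialProj.continuous radialProj_mem_closedBall
  obtain ⟨x, hx⟩ := exists_eq_zero_of_eq_self_of_le_norm (H := fun x => x - χ x • f (radialProj x))
    (R := 2) (continuous_id.sub (hχ.smul hfproj)) fun x hx => by
      have : χ x = 0 := max_eq_left (min_le_of_right_le (by linarith))
      simp [this]
  rw [sub_eq_zero] at hx
  have hnorm : ‖x‖ ≤ χ x := by
    have hfx := mem_closedBall_zero_iff.1 (hmaps (radialProj_mem_closedBall x))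
    calc ‖x‖ = χ x * ‖f (radialProj x)‖ := by
          conv_lhs => rw [hx, norm_smul, Real.norm_of_nonneg (le_max_left _ _)]
      _ ≤ χ x := mul_le_of_le_one_right (le_max_left _ _) hfx
  have hx1 : ‖x‖ ≤ 1 := hnorm.trans (max_le zero_le_one (min_le_left _ _))
  have hχx : χ x = 1 := by
    simp only [χ]
    rw [min_eq_left (by linarith), max_eq_right zero_le_one]
  rw [hχx, one_smul, radialProj_of_norm_le_one hx1] at hx
  exact ⟨x, mem_closedBall_zero_iff.2 hx1, hx.symm⟩

end Brouwer

section InvarianceOfDomain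

section Normed

variable {E : Type*} [NormedAddCommGroup E] [NormedSpace ℝ E]

theorem exists_continuousOn_compl_singleton_mem_sphere (c : E) {ρ : ℝ} (hρ : 0 < ρ) :
    ∃ Φ : E → E, ContinuousOn Φ {c}ᶜ ∧ (∀ y, ρ ≤ dist y c → Φ y = y) ∧
      ∀ y ≠ c, dist y c ≤ ρ → Φ y ∈ sphere c ρ := by
  refine ⟨fun y => c + max (ρ / ‖y - c‖) 1 • (y - c), ?_, fun y hy => ?_, fun y hyc hy => ?_⟩
  · have hsub : Continuous fun y => y - c := by fun_prop
    refine continuousOn_const.add (ContinuousOn.smul ?_ hsub.continuousOn)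
    exact (continuousOn_const.div hsub.norm.continuousOn fun y hy =>
      norm_ne_zero_iff.2 (sub_ne_zero.2 hy)).sup continuousOn_const
  · rw [dist_eq_norm] at hy
    beta_reduce
    rw [max_eq_right (div_le_one_of_le₀ hy (norm_nonneg _)), one_smul, add_sub_cancel]
  · have hpos : 0 < ‖y - c‖ := norm_pos_iff.2 (sub_ne_zero.2 hyc)
    rw [dist_eq_norm] at hy
    beta_reduce
    rw [max_eq_left ((one_le_div hpos).2 hy), mem_sphere_iff_norm, add_sub_cancel_left, norm_smul,
      Real.norm_of_nonneg (by positivity), div_mul_cancel₀ _ hpos.ne']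

variable [FiniteDimensional ℝ E]

theorem exists_continuous_approx_ne_zero [MeasurableSpace E] [BorelSpace E] {μ : Measure E}
    [μ.IsAddHaarMeasure] {G : E → E} (hG : Continuous G) {S : Set E} (hS : μ S = 0) {δ : ℝ}
    (hδ : 0 < δ) :
    ∃ P : E → E, Continuous P ∧ (∀ y, ‖P y - G y‖ < δ) ∧ ∀ y ∈ S, P y ≠ 0 := by
  obtain ⟨P, hP, hPG, -⟩ := hG.exists_contDiff_approx 1
    (continuous_const (y := δ / 2)) (fun _ => half_pos hδ)
  have hnull : μ (P '' S) = 0 := addHaar_image_eq_zero_of_differentiableOn_of_addHaar_eq_zero _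
    (hP.differentiable one_ne_zero).differentiableOn hS
  obtain ⟨a, haδ, ha⟩ : ∃ a ∈ ball (0 : E) (δ / 2), a ∉ P '' S := by
    by_contra! h
    exact (measure_ball_pos μ 0 (half_pos hδ)).ne' (measure_mono_null h hnull)
  refine ⟨fun y => P y - a, hP.continuous.sub continuous_const, fun y => ?_,
    fun y hy h0 => ha ⟨y, hy, sub_eq_zero.1 h0⟩⟩
  calc ‖P y - a - G y‖ = ‖P y - G y - a‖ := by rw [sub_right_comm]
    _ ≤ ‖P y - G y‖ + ‖a‖ := norm_sub_le _ _
    _ < δ / 2 + δ / 2 := add_lt_add (by simpa [dist_eq_norm] using hPG y) (by simpa using haδ)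
    _ = δ := add_halves δ

/-- The zeros of `G` on `K` all lie in the ball around the missing point `c`. Away from that ball a
small perturbation of `G` does not create zeros, and inside it one can first push `K` onto the
bounding sphere, which is a null set. -/
theorem exists_continuousOn_norm_sub_le_ne_zero {G : E → E} (hG : Continuous G) {K : Set E}
    (hK : IsCompact K) {c : E} (hc : c ∉ K) {ρ ε : ℝ} (hρ : 0 < ρ) (hε : 0 < ε)
    (hGc : ∀ y ∈ closedBall c ρ, ‖G y‖ ≤ ε) (hGK : ∀ y ∈ K, ρ ≤ dist y c → G y ≠ 0) :
    ∃ H : E → E, ContinuousOn H K ∧ (∀ y ∈ K, ‖H y - G y‖ ≤ 3 * ε) ∧ ∀ y ∈ K, H y ≠ 0 := by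
  borelize E
  obtain ⟨δ₀, hδ₀, hGδ₀⟩ : ∃ δ, 0 < δ ∧ ∀ y ∈ K ∩ {y | ρ ≤ dist y c}, δ ≤ ‖G y‖ :=
    (hK.inter_right (isClosed_le continuous_const (by fun_prop))).exists_forall_le'
      hG.norm.continuousOn fun y hy => norm_pos_iff.2 (hGK y hy.1 hy.2)
  obtain ⟨P, hP, hPG, hP0⟩ := exists_continuous_approx_ne_zero hG
    (Measure.addHaar_sphere_of_ne_zero Measure.addHaar c hρ.ne') (lt_min hδ₀ hε)
  obtain ⟨Φ, hΦ, hΦout, hΦin⟩ := exists_continuousOn_compl_singleton_mem_sphere c hρ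
  have hKc : ∀ y ∈ K, y ≠ c := fun y hy h => hc (h ▸ hy)
  refine ⟨P ∘ Φ, hP.comp_continuousOn (hΦ.mono hKc), fun y hy => ?_, fun y hy => ?_⟩ <;>
    rcases le_total ρ (dist y c) with hyc | hyc
  · rw [Function.comp_apply, hΦout y hyc]
    linarith [hPG y, min_le_right δ₀ ε]
  · have hΦy := hΦin y (hKc y hy) hyc
    calc ‖P (Φ y) - G y‖ = ‖(P (Φ y) - G (Φ y)) + G (Φ y) - G y‖ := by rw [sub_add_cancel]
      _ ≤ ‖P (Φ y) - G (Φ y)‖ + ‖G (Φ y)‖ + ‖G y‖ :=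
          (norm_sub_le _ _).trans (add_le_add_left (norm_add_le _ _) _)
      _ ≤ ε + ε + ε := add_le_add_three ((hPG _).le.trans (min_le_right _ _))
          (hGc _ (sphere_subset_closedBall hΦy)) (hGc y hyc)
      _ = 3 * ε := by ring
  · intro h0
    have h := hPG y
    rw [Function.comp_apply, hΦout y hyc] at h0
    rw [h0, zero_sub, norm_neg] at h
    linarith [hGδ₀ y ⟨hy, hyc⟩, min_le_left δ₀ ε]
  · exact hP0 _ (hΦin y (hKc y hy) hyc)

end Normed

section Euclidean

variable {E : Type*} [NormedAddCommGroup E] [InnerProductSpace ℝ E] [FiniteDimensional ℝ E]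

theorem exists_eq_zero_of_norm_sub_self_le_one {H : E → E} (hH : ContinuousOn H (closedBall 0 1))
    (hclose : ∀ x ∈ closedBall 0 1, ‖H x - x‖ ≤ 1) : ∃ x ∈ closedBall 0 1, H x = 0 := by
  obtain ⟨x, hx, hfix⟩ := exists_eq_self_of_mapsTo_closedBall (f := fun x => x - H x)
    (continuousOn_id.sub hH) fun x hx => by
      rw [mem_closedBall_zero_iff, norm_sub_rev]
      exact hclose x hx
  exact ⟨x, hx, sub_eq_self.1 hfix⟩

/-- Otherwise a continuous extension of `f⁻¹`, whose only zero on the image of `f` is `f 0`, could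
be perturbed to lose that zero, contradicting the stability of the zero of the identity map. -/
theorem image_closedBall_mem_nhds {f : E → E} (hf : ContinuousOn f (closedBall 0 1))
    (hinj : InjOn f (closedBall 0 1)) : f '' closedBall 0 1 ∈ 𝓝 (f 0) := by
  set B : Set E := closedBall 0 1
  have hcomp : IsCompact B := isCompact_closedBall 0 1
  have : CompactSpace B := isCompact_iff_compactSpace.1 hcomp
  have h0B : (0 : E) ∈ B := by simp [B]
  obtain ⟨G, hG⟩ := ContinuousMap.exists_extension
    (hf.domRestrict.isClosedEmbedding hinj.injective)
    (⟨Subtype.val, continuous_subtype_val⟩ : C(B, E))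
  have hGf : ∀ x ∈ B, G (f x) = x := fun x hx => DFunLike.congr_fun hG ⟨x, hx⟩
  obtain ⟨ε, hε, hGε⟩ : ∃ ε > 0, ∀ y, dist y (f 0) < ε → ‖G y‖ < 1 / 3 := by
    simpa [hGf 0 h0B] using Metric.continuous_iff.1 G.continuous (f 0) (1 / 3) (by norm_num)
  by_contra hnhds
  obtain ⟨c, hcε, hc⟩ : ∃ c, dist c (f 0) < ε / 2 ∧ c ∉ f '' B := by
    by_contra! h
    exact hnhds (Metric.mem_nhds_iff.2 ⟨ε / 2, half_pos hε, h⟩)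
  obtain ⟨H, hH, hHG, hH0⟩ := exists_continuousOn_norm_sub_le_ne_zero G.continuous
    (hcomp.image_of_continuousOn hf) hc (half_pos hε) (by norm_num : (0 : ℝ) < 1 / 3)
    (fun y hy => (hGε y (by linarith [dist_triangle y c (f 0), mem_closedBall.1 hy])).le) <| by
      rintro _ ⟨x, hx, rfl⟩ hxc hx0
      rw [hGf x hx] at hx0
      rw [hx0, dist_comm] at hxc
      exact hcε.not_ge hxc
  obtain ⟨x, hx, hx0⟩ := exists_eq_zero_of_norm_sub_self_le_one (H := H ∘ f)
    (hH.comp hf (mapsTo_image f B)) fun x hx => by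
      simpa [hGf x hx] using hHG (f x) (mem_image_of_mem f hx)
  exact hH0 (f x) (mem_image_of_mem f hx) hx0

theorem image_mem_nhds_of_continuousOn_of_injOn {f : E → E} {U : Set E} {x : E} (hU : U ∈ 𝓝 x)
    (hf : ContinuousOn f U) (hinj : InjOn f U) : f '' U ∈ 𝓝 (f x) := by
  obtain ⟨ρ, hρ, hsub⟩ := Metric.nhds_basis_closedBall.mem_iff.1 hU
  have hmaps : MapsTo (fun z : E => x + ρ • z) (closedBall 0 1) U := fun z hz => hsub <| by
    rw [mem_closedBall_zero_iff] at hz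
    rw [mem_closedBall, dist_eq_norm, add_sub_cancel_left, norm_smul, Real.norm_of_nonneg hρ.le]
    exact mul_le_of_le_one_right hρ.le hz
  have himage := image_closedBall_mem_nhds (f := fun z => f (x + ρ • z))
    (hf.comp (by fun_prop) hmaps) fun z hz w hw hzw =>
      smul_right_injective E hρ.ne' (add_left_cancel (hinj (hmaps hz) (hmaps hw) hzw))
  rw [smul_zero, add_zero] at himage
  refine Filter.mem_of_superset himage ?_
  rintro _ ⟨z, hz, rfl⟩
  exact mem_image_of_mem f (hmaps hz)

end Euclidean

section Manifold

variable {M N : Type*} [TopologicalSpace M] [TopologicalSpace N]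

theorem isOpenMap_of_isLocallyInjective (E : Type*) [NormedAddCommGroup E]
    [InnerProductSpace ℝ E] [FiniteDimensional ℝ E] [ChartedSpace E M] [ChartedSpace E N]
    {f : M → N} (hf : Continuous f) (hinj : IsLocallyInjective f) : IsOpenMap f := by
  refine IsOpenMap.of_nhds_le fun x => Filter.le_map fun s hs => ?_
  obtain ⟨U, hU, hxU, hUinj⟩ := hinj x
  let φ := chartAt E x
  let ψ := chartAt E (f x)
  have hxφ : x ∈ φ.source := mem_chart_source E x
  have hxψ : f x ∈ ψ.source := mem_chart_source E (f x)
  obtain ⟨W, hW, hWs, hWU, hWφ, hWψ⟩ :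
      ∃ W ∈ 𝓝 x, W ⊆ s ∧ W ⊆ U ∧ W ⊆ φ.source ∧ MapsTo f W ψ.source :=
    ⟨s ∩ (U ∩ (φ.source ∩ f ⁻¹' ψ.source)), Filter.inter_mem hs <|
      Filter.inter_mem (hU.mem_nhds hxU) <| Filter.inter_mem (chart_source_mem_nhds E x) <|
        hf.continuousAt (chart_source_mem_nhds E (f x)),
      fun _ h => h.1, fun _ h => h.2.1, fun _ h => h.2.2.1, fun _ h => h.2.2.2⟩
  have hφW : MapsTo φ.symm (φ '' W) W := by
    rintro _ ⟨y, hy, rfl⟩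
    rwa [φ.left_inv (hWφ hy)]
  have hsub : φ '' W ⊆ φ.target := image_subset_iff.2 fun y hy => φ.map_source (hWφ hy)
  have hcont : ContinuousOn (fun z => ψ (f (φ.symm z))) (φ '' W) :=
    ψ.continuousOn.comp (hf.comp_continuousOn (φ.continuousOn_symm.mono hsub))
      (hWψ.comp hφW)
  have hchart : InjOn (fun z => ψ (f (φ.symm z))) (φ '' W) :=
    ψ.injOn.comp ((hUinj.mono hWU).comp (φ.symm.injOn.mono hsub) hφW) (hWψ.comp hφW)
  have himage := image_mem_nhds_of_continuousOn_of_injOn (φ.image_mem_nhds hxφ hW) hcont hchart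
  rw [φ.left_inv hxφ] at himage
  filter_upwards [ψ.continuousAt hxψ himage, chart_source_mem_nhds E (f x)]
  rintro y ⟨_, ⟨w, hw, rfl⟩, hwy⟩ hy
  have hfw : ψ (f w) = ψ y := by simpa only [φ.left_inv (hWφ hw)] using hwy
  exact ⟨w, hWs hw, ψ.injOn (hWψ hw) hy hfw⟩

theorem isLocalHomeomorph_of_isLocallyInjective (E : Type*) [NormedAddCommGroup E]
    [InnerProductSpace ℝ E] [FiniteDimensional ℝ E] [ChartedSpace E M] [ChartedSpace E N]
    {f : M → N} (hf : Continuous f) (hinj : IsLocallyInjective f) : IsLocalHomeomorph f := by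
  refine isLocalHomeomorph_iff_isOpenEmbedding_restrict.2 fun x => ?_
  obtain ⟨U, hU, hxU, hUinj⟩ := hinj x
  exact ⟨U, hU.mem_nhds hxU, .of_continuous_injective_isOpenMap hf.continuousOn.domRestrict
    hUinj.injective ((isOpenMap_of_isLocallyInjective E hf hinj).domRestrict hU)⟩

end Manifold

end InvarianceOfDomain

section CoveringMap

variable {X Y : Type*} [TopologicalSpace X] [TopologicalSpace Y] {p : X → Y}

theorem injective_of_continuous_of_rightInverse [PreconnectedSpace X] (hp : IsCoveringMap p)
    {s : Y → X} (hs : Continuous s) (hsp : Function.RightInverse s p) : Function.Injective p := by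
  intro x x' hxx'
  have hlift : p ∘ (s ∘ p) = p ∘ id := funext fun a => hsp (p a)
  have hid : s ∘ p = id := hp.eq_of_comp_eq (hs.comp hp.continuous) continuous_id hlift (s (p x))
    (congrArg s (hsp (p x)))
  calc x = s (p x) := (congrFun hid x).symm
    _ = s (p x') := by rw [hxx']
    _ = x' := congrFun hid x'

theorem exists_continuousOn_section_of_isSimplyConnected [LocallyPathConnectedSpace Y]
    (hp : IsCoveringMap p) {U : Set Y} (hU : IsOpen U) (hUsc : IsSimplyConnected U) {x : X}
    (hx : p x ∈ U) : ∃ s : Y → X, ContinuousOn s U ∧ (∀ y ∈ U, p (s y) = y) ∧ s (p x) = x := by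
  have := hUsc.simplyConnectedSpace
  have := hU.locallyPathConnectedSpace
  obtain ⟨s, ⟨hsx, hs⟩, -⟩ := hp.existsUnique_continuousMap_lifts
    (⟨Subtype.val, continuous_subtype_val⟩ : C(U, Y)) ⟨p x, hx⟩ x rfl
  classical
  let s' : Y → X := fun y => if hy : y ∈ U then s ⟨y, hy⟩ else x
  have hs' : ∀ y (hy : y ∈ U), s' y = s ⟨y, hy⟩ := fun y hy => dif_pos hy
  refine ⟨s', continuousOn_iff_continuous_domRestrict.2 ?_, fun y hy => ?_, ?_⟩
  · exact s.continuous.congr fun y => (hs' y y.2).symm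
  · rw [hs' y hy]
    exact congrFun hs ⟨y, hy⟩
  · rw [hs' _ hx, hsx]

theorem exists_continuous_rightInverse_of_union (hp : IsCoveringMap p) {U V : Set Y}
    (hU : IsOpen U) (hV : IsOpen V) (hUV : IsPreconnected (U ∩ V)) (hcover : U ∪ V = univ)
    {s t : Y → X} (hs : ContinuousOn s U) (ht : ContinuousOn t V) (hps : ∀ y ∈ U, p (s y) = y)
    (hpt : ∀ y ∈ V, p (t y) = y) {z : Y} (hz : z ∈ U ∩ V) (hst : s z = t z) :
    ∃ r : Y → X, Continuous r ∧ Function.RightInverse r p := by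
  classical
  have hagree : EqOn s t (U ∩ V) :=
    hp.eqOn_of_comp_eqOn hUV (hs.mono inter_subset_left) (ht.mono inter_subset_right)
      (fun y hy => (hps y hy.1).trans (hpt y hy.2).symm) hz hst
  let r := U.piecewise s t
  have hrU : EqOn r s U := piecewise_eqOn U s t
  have hrV : EqOn r t V := fun y hyV => by
    by_cases hyU : y ∈ U
    · rw [hrU hyU, hagree ⟨hyU, hyV⟩]
    · exact piecewise_eq_of_notMem U s t hyU
  refine ⟨r, ?_, fun y => ?_⟩
  · rw [← continuousOn_univ, ← hcover]
    exact (hs.congr hrU).union_of_isOpen (ht.congr hrV) hU hV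
  · rcases hcover.ge (mem_univ y) with hy | hy
    · rw [hrU hy, hps y hy]
    · rw [hrV hy, hpt y hy]

theorem injective_of_isSimplyConnected_union [PreconnectedSpace X] [LocallyPathConnectedSpace Y]
    (hp : IsCoveringMap p) {U V : Set Y} (hU : IsOpen U) (hUsc : IsSimplyConnected U)
    (hV : IsOpen V) (hVsc : IsSimplyConnected V) (hUV : IsConnected (U ∩ V))
    (hcover : U ∪ V = univ) : Function.Injective p := by
  rcases isEmpty_or_nonempty X with hX | ⟨⟨x⟩⟩
  · exact Function.injective_of_subsingleton p
  wlog hx : p x ∈ U generalizing U V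
  · exact this hV hVsc hU hUsc (inter_comm U V ▸ hUV) (union_comm U V ▸ hcover)
      ((hcover.ge (mem_univ (p x))).resolve_left hx)
  obtain ⟨s, hs, hps, -⟩ := exists_continuousOn_section_of_isSimplyConnected hp hU hUsc hx
  obtain ⟨z, hzU, hzV⟩ := hUV.nonempty
  have hz : p (s z) = z := hps z hzU
  obtain ⟨t, ht, hpt, htz⟩ :=
    exists_continuousOn_section_of_isSimplyConnected hp hV hVsc (hz.symm ▸ hzV)
  rw [hz] at htz
  obtain ⟨r, hr, hpr⟩ := exists_continuous_rightInverse_of_union hp hU hV hUV.isPreconnected hcover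
    hs ht hps hpt ⟨hzU, hzV⟩ htz.symm
  exact injective_of_continuous_of_rightInverse hp hr hpr

end CoveringMap

section Sphere

variable {E : Type*} [NormedAddCommGroup E] [InnerProductSpace ℝ E]

theorem isSimplyConnected_compl_singleton_sphere (v : sphere (0 : E) 1) :
    IsSimplyConnected ({v}ᶜ : Set (sphere (0 : E) 1)) := by
  let e := stereographic (norm_eq_of_mem_sphere v)
  have hs : e.source = {v}ᶜ := stereographic_source _
  have ht : e.target = univ := stereographic_target _
  have : ContractibleSpace ({v}ᶜ : Set (sphere (0 : E) 1)) :=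
    (((Homeomorph.setCongr hs).symm.trans e.toHomeomorphSourceTarget).trans
      ((Homeomorph.setCongr ht).trans (Homeomorph.Set.univ _))).contractibleSpace
  exact SimplyConnectedSpace.ofContractible _

variable {d : ℕ} [Fact (Module.finrank ℝ E = d + 1)]

theorem isConnected_compl_pair_sphere (hd : 2 ≤ d) {v w : sphere (0 : E) 1} (hvw : w ≠ v) :
    IsConnected ({v}ᶜ ∩ {w}ᶜ : Set (sphere (0 : E) 1)) := by
  let e := stereographic' d v
  have hsource : e.source = {v}ᶜ := stereographic'_source v
  have htarget : e.target = univ := stereographic'_target v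
  have hrank : 1 < Module.rank ℝ (EuclideanSpace ℝ (Fin d)) := by
    rw [← Module.finrank_eq_rank, finrank_euclideanSpace_fin]
    exact_mod_cast hd
  have hcont : ContinuousOn e.symm {e w}ᶜ := e.continuousOn_symm.mono (by simp [htarget])
  have hw : w ∈ e.source := hsource ▸ hvw
  have himage : e.symm '' {e w}ᶜ = {v}ᶜ ∩ {w}ᶜ :=
    calc e.symm '' {e w}ᶜ = e.symm '' (e.symm.source \ {e w}) := by
          rw [e.symm_source, htarget, compl_eq_univ_sdiff]
      _ = e.source \ {w} := by
          rw [e.symm.injOn.image_sdiff_subset (singleton_subset_iff.2 (e.map_source hw)),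
            e.symm.image_source_eq_target, e.symm_target, image_singleton, e.left_inv hw]
      _ = {v}ᶜ ∩ {w}ᶜ := by rw [hsource, sdiff_eq]
  exact himage ▸ (isConnected_compl_singleton_of_one_lt_rank hrank _).image _ hcont

theorem injective_of_isLocallyInjective_sphere (hd : 2 ≤ d) {M : Type*} [TopologicalSpace M]
    [CompactSpace M] [T2Space M] [PreconnectedSpace M] [ChartedSpace (EuclideanSpace ℝ (Fin d)) M]
    {f : M → sphere (0 : E) 1} (hf : Continuous f) (hinj : IsLocallyInjective f) :
    Function.Injective f := by
  have hcov : IsCoveringMap f := isLocalHomeomorph_iff_isCoveringMap.1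
    (isLocalHomeomorph_of_isLocallyInjective (EuclideanSpace ℝ (Fin d)) hf hinj)
  rcases isEmpty_or_nonempty M with hM | ⟨⟨x⟩⟩
  · exact Function.injective_of_subsingleton f
  have := ChartedSpace.locallyPathConnectedSpace (EuclideanSpace ℝ (Fin d)) (sphere (0 : E) 1)
  have hv : -f x ≠ f x := (ne_neg_of_mem_unit_sphere ℝ (f x)).symm
  refine injective_of_isSimplyConnected_union hcov isOpen_compl_singleton
    (isSimplyConnected_compl_singleton_sphere (f x)) isOpen_compl_singleton
    (isSimplyConnected_compl_singleton_sphere (-f x)) (isConnected_compl_pair_sphere hd hv) ?_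
  rw [← compl_inter, singleton_inter_eq_empty.2 (by simpa using hv.symm), compl_empty]

end Sphere

section ProjectiveSpace

theorem isLocallyInjective_comp {X Y Z : Type*} [TopologicalSpace X] [TopologicalSpace Y]
    {g : Y → Z} {f : X → Y} (hg : IsLocallyInjective g) (hf : IsLocallyInjective f)
    (hcont : Continuous f) : IsLocallyInjective (g ∘ f) := fun x => by
  obtain ⟨U, hU, hxU, hUinj⟩ := hf x
  obtain ⟨V, hV, hxV, hVinj⟩ := hg (f x)
  exact ⟨U ∩ f ⁻¹' V, hU.inter (hV.preimage hcont), ⟨hxU, hxV⟩,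
    hVinj.comp (hUinj.mono inter_subset_left) fun _ hy => hy.2⟩

theorem isLocallyInjective_mk_antipodalSetoid (n : ℕ) :
    IsLocallyInjective (Quotient.mk (antipodalSetoid n)) := by
  intro x
  refine ⟨{y | 0 < inner ℝ (x : EuclideanSpace ℝ (Fin n)) y},
    isOpen_lt continuous_const (by fun_prop), by simp, fun y hy z hz hyz => ?_⟩
  rcases (Quotient.exact hyz : (antipodalSetoid n).r y z) with h | h
  · exact Subtype.ext h
  · simp only [mem_ofPred_eq, h, inner_neg_right] at hy hz
    linarith

end ProjectiveSpace

theorem le_two_of_exists_continuous_injective_general (n : ℕ)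
    (h : ∃ f : RealProjSpace n → sphere (0 : EuclideanSpace ℝ (Fin n)) 1,
      Continuous f ∧ IsLocallyInjective f) :
    n ≤ 2 := by
  obtain ⟨f, hf, hinj⟩ := h
  by_contra! hn
  obtain ⟨d, rfl⟩ : ∃ d, n = d + 1 := ⟨n - 1, by omega⟩
  have : Fact (Module.finrank ℝ (EuclideanSpace ℝ (Fin (d + 1))) = d + 1) :=
    ⟨finrank_euclideanSpace_fin⟩
  have hrank : 1 < Module.rank ℝ (EuclideanSpace ℝ (Fin (d + 1))) := by
    rw [← Module.finrank_eq_rank, finrank_euclideanSpace_fin]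
    exact_mod_cast (by omega : 1 < d + 1)
  have hconn := isConnected_sphere hrank 0 zero_le_one
  have := isPreconnected_iff_preconnectedSpace.1 hconn.isPreconnected
  have := isCompact_iff_compactSpace.1 (isCompact_sphere (0 : EuclideanSpace ℝ (Fin (d + 1))) 1)
  have hq : Continuous (Quotient.mk (antipodalSetoid (d + 1))) := continuous_quotient_mk'
  have hfq : Function.Injective (f ∘ Quotient.mk (antipodalSetoid (d + 1))) :=
    injective_of_isLocallyInjective_sphere (d := d) (by omega) (hf.comp hq)
      (isLocallyInjective_comp hinj (isLocallyInjective_mk_antipodalSetoid _) hq)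
  obtain ⟨v⟩ := hconn.nonempty.to_subtype
  have hv : Quotient.mk (antipodalSetoid (d + 1)) v = Quotient.mk _ (-v) :=
    Quotient.sound (.inr (by simp))
  exact ne_neg_of_mem_unit_sphere ℝ v (hfq (congrArg f hv))

theorem le_two_of_exists_continuous_injective (n : ℕ) (hn : 1 ≤ n)
    (h : ∃ f : RealProjSpace n → sphere (0 : EuclideanSpace ℝ (Fin n)) 1,
      Continuous f ∧ Function.Injective f) :
    n ≤ 2 :=
  have ⟨f, hf, hinj⟩ := h
  le_two_of_exists_continuous_injective_general n ⟨f, hf, hinj.IsLocallyInjective⟩
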